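/- Let Ω be a nonempty open subset of ℂ. Then the set S_uc \ S_u is spaceable in H(Ω)^ℕ: there exists a closed infinite-dimensional vector subspace M of H(Ω)^ℕ such that M \ {0} ⊆ S_uc \ S_u. -/

import Mathlib

open Filter Topology

set_option synthInstance.maxHeartbeats 1000000
set_option maxHeartbeats 1000000

noncomputable section

/-- The subalgebra of `C(Ω, ℂ)` consisting of (restrictions to `Ω` of) functions
holomorphic on `Ω`. -/
def Hol (Ω : Set ℂ) : Subalgebra ℂ C(Ω, ℂ) where
  carrier := {f | ∃ g : ℂ → ℂ, DifferentiableOn ℂ g Ω ∧ ∀ z : Ω, f z = g z}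
  mul_mem' := by
    rintro f₁ f₂ ⟨g₁, hg₁, he₁⟩ ⟨g₂, hg₂, he₂⟩
    exact ⟨g₁ * g₂, hg₁.mul hg₂, fun z => by simp [he₁ z, he₂ z]⟩
  add_mem' := by
    rintro f₁ f₂ ⟨g₁, hg₁, he₁⟩ ⟨g₂, hg₂, he₂⟩
    exact ⟨g₁ + g₂, hg₁.add hg₂, fun z => by simp [he₁ z, he₂ z]⟩
  algebraMap_mem' := fun c => ⟨fun _ => c, differentiableOn_const c, fun _ => rfl⟩

/-- The space `H(Ω)^ℕ` of sequences of holomorphic functions on `Ω`, with the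
product topology (each factor carrying the compact-open topology). -/
abbrev HSeq (Ω : Set ℂ) := ℕ → Hol Ω

/-- Sequences tending to `0` pointwise on `Ω`. -/
def Sp (Ω : Set ℂ) : Set (HSeq Ω) :=
  {F | ∀ z : Ω, Tendsto (fun n => (F n : C(Ω, ℂ)) z) atTop (𝓝 0)}

/-- Sequences tending to `0` uniformly on each compact subset of `Ω`. -/
def Suc (Ω : Set ℂ) : Set (HSeq Ω) :=
  {F | ∀ K : Set Ω, IsCompact K →
    TendstoUniformlyOn (fun n (z : Ω) => (F n : C(Ω, ℂ)) z) 0 atTop K}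

/-- Sequences tending to `0` uniformly on `Ω`. -/
def Su (Ω : Set ℂ) : Set (HSeq Ω) :=
  {F | TendstoUniformly (fun n (z : Ω) => (F n : C(Ω, ℂ)) z) 0 atTop}

/-- Restriction of a holomorphic function on `Ω₂` to a subset `Ω₁ ⊆ Ω₂`. -/
def holRestrict {Ω₁ Ω₂ : Set ℂ} (h : Ω₁ ⊆ Ω₂) (f : Hol Ω₂) : Hol Ω₁ := by
  refine ⟨(f : C(Ω₂, ℂ)).comp ⟨Set.inclusion h, continuous_inclusion h⟩, ?_⟩
  obtain ⟨g, hg, he⟩ := f.2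
  exact ⟨g, hg.mono h, fun z => he ⟨z, h z.2⟩⟩

end

/-- A function differentiable on `Ω`, as an element of `Hol Ω`. -/
def Hol.ofDifferentiableOn {Ω : Set ℂ} (g : ℂ → ℂ) (hg : DifferentiableOn ℂ g Ω) : Hol Ω :=
  ⟨⟨fun z => g z, hg.continuousOn.domRestrict⟩, g, hg, fun _ => rfl⟩

theorem Hol.continuous_eval {Ω : Set ℂ} (z : Ω) : Continuous fun f : Hol Ω => (f : C(Ω, ℂ)) z :=
  (continuous_eval_const z).comp continuous_subtype_val

theorem HSeq.continuous_eval {Ω : Set ℂ} (n : ℕ) (z : Ω) :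
    Continuous fun F : HSeq Ω => (F n : C(Ω, ℂ)) z :=
  (Hol.continuous_eval z).comp (continuous_apply n)

/-- Every nonempty open subset of the plane carries an unbounded holomorphic function. -/
theorem exists_unbounded_differentiableOn {Ω : Set ℂ} (hΩ : IsOpen Ω) (hne : Ω.Nonempty) :
    ∃ h : ℂ → ℂ, DifferentiableOn ℂ h Ω ∧ ∀ C : ℝ, ∃ z ∈ Ω, C < ‖h z‖ := by
  by_cases hc : IsClosed Ω
  · have hu : Ω = Set.univ := (show IsClopen Ω from ⟨hc, hΩ⟩).eq_univ hne
    refine ⟨id, differentiableOn_id, fun C => ⟨((|C| + 1 : ℝ) : ℂ), by simp [hu], ?_⟩⟩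
    rw [id, Complex.norm_real, Real.norm_eq_abs, abs_of_pos (by positivity)]
    linarith [le_abs_self C]
  · obtain ⟨a, ha, haΩ⟩ : ∃ a ∈ closure Ω, a ∉ Ω := by
      by_contra! H
      exact hc (closure_subset_iff_isClosed.mp H)
    have hza : ∀ z ∈ Ω, z - a ≠ 0 := fun z hz h0 => haΩ (sub_eq_zero.mp h0 ▸ hz)
    refine ⟨fun z => (z - a)⁻¹, (differentiableOn_id.sub_const a).inv hza, fun C => ?_⟩
    obtain ⟨z, hz, hd⟩ := Metric.mem_closure_iff.mp ha (|C| + 1)⁻¹ (by positivity)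
    refine ⟨z, hz, ?_⟩
    have h1 : 0 < ‖z - a‖ := norm_pos_iff.mpr (hza z hz)
    rw [dist_comm, dist_eq_norm] at hd
    have h2 := (lt_inv_comm₀ h1 (by positivity)).mp hd
    rw [norm_inv]
    linarith [le_abs_self C]

/-- A function holomorphic on `U`, cut off outside a connected component of `U`,
is still holomorphic on `U`. -/
theorem DifferentiableOn.indicator_connectedComponentIn {U : Set ℂ} (hU : IsOpen U) (c : ℂ)
    {f : ℂ → ℂ} (hf : DifferentiableOn ℂ f U) :
    DifferentiableOn ℂ ((connectedComponentIn U c).indicator f) U := by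
  intro z hz
  refine DifferentiableAt.differentiableWithinAt ?_
  by_cases hzc : z ∈ connectedComponentIn U c
  · refine (hf.differentiableAt (hU.mem_nhds hz)).congr_of_eventuallyEq ?_
    filter_upwards [hU.connectedComponentIn.mem_nhds hzc] with w hw
    exact Set.indicator_of_mem hw f
  · refine (differentiableAt_const (0 : ℂ)).congr_of_eventuallyEq ?_
    filter_upwards [hU.connectedComponentIn.mem_nhds (mem_connectedComponentIn hz)] with w hw
    refine Set.indicator_of_notMem (fun hwc => hzc ?_) f
    rw [connectedComponentIn_eq hwc, ← connectedComponentIn_eq hw]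
    exact mem_connectedComponentIn hz

/-- The sequences `F` for which `F 0` vanishes outside `V`, and each `F (n + 1)` is the multiple of
`h` by `F 0 (p j) / (n + 1)`, where `j` is the first component of the pair coded by `n`. -/
def evalMultiples {Ω : Set ℂ} (V : Set ℂ) (h : Hol Ω) (p : ℕ → Ω) : Submodule ℂ (HSeq Ω) where
  carrier := {F | (∀ z : Ω, (z : ℂ) ∉ V → (F 0 : C(Ω, ℂ)) z = 0) ∧
    ∀ (n : ℕ) (z : Ω), (F (n + 1) : C(Ω, ℂ)) z =
      (F 0 : C(Ω, ℂ)) (p n.unpair.1) / (n + 1) * (h : C(Ω, ℂ)) z}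
  zero_mem' := ⟨fun z _ => rfl, fun n z => by simp⟩
  add_mem' := by
    rintro F G ⟨hF, hF'⟩ ⟨hG, hG'⟩
    refine ⟨fun z hz => by simp [hF z hz, hG z hz], fun n z => ?_⟩
    simp only [Pi.add_apply, Subalgebra.coe_add, ContinuousMap.add_apply, hF', hG']
    ring
  smul_mem' := by
    rintro a F ⟨hF, hF'⟩
    refine ⟨fun z hz => by simp [hF z hz], fun n z => ?_⟩
    simp only [Pi.smul_apply, Subalgebra.coe_smul, ContinuousMap.smul_apply, hF', smul_eq_mul]
    ring

theorem isClosed_evalMultiples {Ω : Set ℂ} (V : Set ℂ) (h : Hol Ω) (p : ℕ → Ω) :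
    IsClosed (evalMultiples V h p : Set (HSeq Ω)) := by
  have : (evalMultiples V h p : Set (HSeq Ω)) =
      {F | (∀ z : Ω, (z : ℂ) ∉ V → (F 0 : C(Ω, ℂ)) z = 0) ∧
        ∀ (n : ℕ) (z : Ω), (F (n + 1) : C(Ω, ℂ)) z =
          (F 0 : C(Ω, ℂ)) (p n.unpair.1) / (n + 1) * (h : C(Ω, ℂ)) z} := rfl
  rw [this]
  simp only [Set.ofPred_and, Set.ofPred_forall]
  refine IsClosed.inter ?_ ?_
  · exact isClosed_iInter fun z => isClosed_iInter fun _ =>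
      isClosed_eq (HSeq.continuous_eval 0 z) continuous_const
  · exact isClosed_iInter fun n => isClosed_iInter fun z =>
      isClosed_eq (HSeq.continuous_eval (n + 1) z)
        (((HSeq.continuous_eval 0 _).div_const _).mul continuous_const)

theorem evalMultiples_subset_Suc {Ω : Set ℂ} (V : Set ℂ) (h : Hol Ω) (p : ℕ → Ω) {L : Set ℂ}
    (hL : IsCompact L) (hLΩ : L ⊆ Ω) (hp : ∀ n, (p n : ℂ) ∈ L) :
    (evalMultiples V h p : Set (HSeq Ω)) ⊆ Suc Ω := by
  rintro F ⟨-, hF⟩ K hK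
  obtain ⟨g, hg, hFg⟩ := (F 0).2
  obtain ⟨A, hA⟩ := hL.exists_bound_of_continuousOn (hg.continuousOn.mono hLΩ)
  obtain ⟨B, hB⟩ := hK.exists_bound_of_continuousOn (h : C(Ω, ℂ)).continuous.continuousOn
  have hlim : Tendsto (fun n : ℕ => |A| * |B| * (1 / ((n : ℝ) + 1))) atTop (𝓝 0) := by
    simpa using tendsto_one_div_add_atTop_nhds_zero_nat.const_mul (|A| * |B|)
  rw [Metric.tendstoUniformlyOn_iff]
  intro ε hε
  obtain ⟨N, hN⟩ := eventually_atTop.mp (hlim.eventually_lt_const hε)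
  refine eventually_atTop.mpr ⟨N + 1, fun m hm z hz => ?_⟩
  obtain ⟨n, rfl⟩ : ∃ n, m = n + 1 := ⟨m - 1, by omega⟩
  have hA' : ‖(F 0 : C(Ω, ℂ)) (p n.unpair.1)‖ ≤ |A| := by
    rw [hFg]
    exact (hA _ (hp _)).trans (le_abs_self A)
  have hB' : ‖(h : C(Ω, ℂ)) z‖ ≤ |B| := (hB z hz).trans (le_abs_self B)
  have hn : ‖(n : ℂ) + 1‖ = (n : ℝ) + 1 := by
    exact_mod_cast Complex.norm_natCast (n + 1)
  rw [hF n z, Pi.zero_apply, dist_zero_left, norm_mul, norm_div, hn]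
  calc _ ≤ |A| / ((n : ℝ) + 1) * |B| := by gcongr
    _ = |A| * |B| * (1 / ((n : ℝ) + 1)) := by ring
    _ < ε := hN n (by omega)

theorem notMem_Su_of_mem_evalMultiples {Ω : Set ℂ} {V : Set ℂ} {h : Hol Ω} {p : ℕ → Ω}
    (hh : ∀ C : ℝ, ∃ z, C < ‖(h : C(Ω, ℂ)) z‖) {F : HSeq Ω} (hF : F ∈ evalMultiples V h p) {j : ℕ}
    (hj : (F 0 : C(Ω, ℂ)) (p j) ≠ 0) : F ∉ Su Ω := by
  intro hu
  obtain ⟨N, hN⟩ := eventually_atTop.mp (Metric.tendstoUniformly_iff.mp hu 1 one_pos)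
  set n := Nat.pair j N with hn
  have hNn : N ≤ n + 1 := (Nat.right_le_pair j N).trans (Nat.le_succ _)
  set a := (F 0 : C(Ω, ℂ)) (p j) / (n + 1) with ha
  have ha0 : 0 < ‖a‖ := norm_pos_iff.mpr (div_ne_zero hj (Nat.cast_add_one_ne_zero n))
  obtain ⟨z, hz⟩ := hh ‖a‖⁻¹
  have h1 := hN (n + 1) hNn z
  rw [hF.2 n z, hn, Nat.unpair_pair, ← hn, Pi.zero_apply, dist_zero_left, norm_mul] at h1
  have h2 := mul_lt_mul_of_pos_left hz ha0
  rw [mul_inv_cancel₀ ha0.ne'] at h2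
  exact lt_asymm h1 h2

/-- The sequence in `evalMultiples V h p` with initial term `g`. -/
noncomputable def evalMultiplesSeq {Ω : Set ℂ} (h : Hol Ω) (p : ℕ → Ω) (g : Hol Ω) : HSeq Ω
  | 0 => g
  | n + 1 => ((g : C(Ω, ℂ)) (p n.unpair.1) / (n + 1)) • h

theorem evalMultiplesSeq_mem {Ω : Set ℂ} {V : Set ℂ} (h : Hol Ω) (p : ℕ → Ω) {g : Hol Ω}
    (hg : ∀ z : Ω, (z : ℂ) ∉ V → (g : C(Ω, ℂ)) z = 0) :
    evalMultiplesSeq h p g ∈ evalMultiples V h p :=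
  ⟨hg, fun _ _ => rfl⟩

theorem not_finite_evalMultiples {Ω : Set ℂ} (hΩ : IsOpen Ω) {c : ℂ} (hc : c ∈ Ω) (h : Hol Ω)
    (p : ℕ → Ω) : ¬ Module.Finite ℂ (evalMultiples (connectedComponentIn Ω c) h p) := by
  intro hfin
  set V := connectedComponentIn Ω c
  let g : Polynomial ℂ → Hol Ω := fun P => Hol.ofDifferentiableOn (V.indicator fun z => P.eval z)
    (P.differentiable.differentiableOn.indicator_connectedComponentIn hΩ c)
  have hg : ∀ P (z : Ω), (g P : C(Ω, ℂ)) z = V.indicator (fun z => P.eval z) z := fun _ _ => rfl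
  have hgadd : ∀ P Q, g (P + Q) = g P + g Q := fun P Q => Subtype.ext <| ContinuousMap.ext
    fun z => by by_cases hz : (z : ℂ) ∈ V <;> simp [hg, hz]
  have hgsmul : ∀ (a : ℂ) P, g (a • P) = a • g P := fun a P => Subtype.ext <| ContinuousMap.ext
    fun z => by by_cases hz : (z : ℂ) ∈ V <;> simp [hg, hz]
  let T : Polynomial ℂ →ₗ[ℂ] evalMultiples V h p :=
    { toFun := fun P => ⟨evalMultiplesSeq h p (g P), evalMultiplesSeq_mem h p fun z hz =>
        (hg P z).trans (Set.indicator_of_notMem hz _)⟩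
      map_add' := fun P Q => by
        refine Subtype.ext <| funext fun n => ?_
        cases n with
        | zero => exact hgadd P Q
        | succ n =>
          simp only [evalMultiplesSeq, hgadd, Submodule.coe_add, Pi.add_apply, ← add_smul,
            Subalgebra.coe_add, ContinuousMap.add_apply, add_div]
      map_smul' := fun a P => by
        refine Subtype.ext <| funext fun n => ?_
        cases n with
        | zero => exact hgsmul a P
        | succ n =>
          simp only [evalMultiplesSeq, hgsmul, Submodule.coe_smul, Pi.smul_apply, smul_smul,
            Subalgebra.coe_smul, ContinuousMap.smul_apply, smul_eq_mul, mul_div_assoc,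
            RingHom.id_apply] }
  have hT : Function.Injective T := by
    refine (injective_iff_map_eq_zero T).mpr fun P hP => ?_
    have hP0 : g P = 0 := congrFun (congrArg Subtype.val hP) 0
    have hV : V.Infinite :=
      infinite_of_mem_nhds c (hΩ.connectedComponentIn.mem_nhds (mem_connectedComponentIn hc))
    refine Polynomial.eq_zero_of_infinite_isRoot P (hV.mono fun z hz => ?_)
    have hz0 : (g P : C(Ω, ℂ)) ⟨z, connectedComponentIn_subset Ω c hz⟩ = 0 := by rw [hP0]; rfl
    rwa [hg, Set.indicator_of_mem hz] at hz0
  exact Module.Finite.not_linearIndependent_of_infinite _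
    ((Polynomial.basisMonomials ℂ).linearIndependent.map_injOn T hT.injOn)

/-- A holomorphic function vanishing on a dense subset of a ball in `Ω` vanishes on the connected
component of `Ω` containing that ball. -/
theorem eqOn_zero_connectedComponentIn {Ω : Set ℂ} (hΩ : IsOpen Ω) {c : ℂ} {r : ℝ} (hr : 0 < r)
    (hball : Metric.closedBall c r ⊆ Ω) {g : ℂ → ℂ} (hg : DifferentiableOn ℂ g Ω)
    {q : ℕ → Metric.closedBall c r} (hq : DenseRange q) (h0 : ∀ j, g (q j) = 0) :
    Set.EqOn g 0 (connectedComponentIn Ω c) := by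
  have hc : c ∈ Ω := hball (Metric.mem_closedBall_self hr.le)
  have hgb : (Metric.closedBall c r).domRestrict g = fun _ => 0 :=
    hq.equalizer (hg.continuousOn.mono hball).domRestrict continuous_const (funext h0)
  refine AnalyticOnNhd.eqOn_zero_of_preconnected_of_eventuallyEq_zero
    ((hg.analyticOnNhd hΩ).mono (connectedComponentIn_subset Ω c))
    isPreconnected_connectedComponentIn (mem_connectedComponentIn hc) ?_
  filter_upwards [Metric.closedBall_mem_nhds c hr] with z hz
  exact congrFun hgb ⟨z, hz⟩

/-- `S_uc \ S_u` is spaceable in `H(Ω)^ℕ`. -/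
theorem Suc_diff_Su_spaceable
    (Ω : Set ℂ) (hΩ : IsOpen Ω) (hne : Ω.Nonempty) :
    ∃ M : Submodule ℂ (HSeq Ω),
      IsClosed (M : Set (HSeq Ω)) ∧ ¬ Module.Finite ℂ M ∧
      (M : Set (HSeq Ω)) \ {0} ⊆ Suc Ω \ Su Ω := by
  obtain ⟨h, hh, hunb⟩ := exists_unbounded_differentiableOn hΩ hne
  obtain ⟨c, hc⟩ := hne
  obtain ⟨r, hr, hball⟩ := Metric.nhds_basis_closedBall.mem_iff.mp (hΩ.mem_nhds hc)
  have : Nonempty (Metric.closedBall c r) := ⟨⟨c, Metric.mem_closedBall_self hr.le⟩⟩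
  let q := TopologicalSpace.denseSeq (Metric.closedBall c r)
  let p : ℕ → Ω := fun n => ⟨q n, hball (q n).2⟩
  let H := Hol.ofDifferentiableOn h hh
  refine ⟨evalMultiples (connectedComponentIn Ω c) H p, isClosed_evalMultiples _ _ _,
    not_finite_evalMultiples hΩ hc H p, fun F hF => ⟨?_, ?_⟩⟩
  · exact evalMultiples_subset_Suc _ H p (isCompact_closedBall c r) hball (fun n => (q n).2) hF.1
  obtain ⟨j, hj⟩ : ∃ j, (F 0 : C(Ω, ℂ)) (p j) ≠ 0 := by
    by_contra! h0
    obtain ⟨g, hg, hFg⟩ := (F 0).2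
    have hV := eqOn_zero_connectedComponentIn hΩ hr hball hg
      (TopologicalSpace.denseRange_denseSeq _) fun j => (hFg (p j)).symm.trans (h0 j)
    refine hF.2 <| funext fun n => Subtype.ext <| ContinuousMap.ext fun z => ?_
    cases n with
    | zero =>
      by_cases hz : (z : ℂ) ∈ connectedComponentIn Ω c
      · exact (hFg z).trans (hV hz)
      · exact hF.1.1 z hz
    | succ n => rw [hF.1.2 n z, h0, zero_div, zero_mul]; rfl
  refine notMem_Su_of_mem_evalMultiples (fun C => ?_) hF.1 hj
  obtain ⟨z, hz, hCz⟩ := hunb C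
  exact ⟨⟨z, hz⟩, hCz⟩
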